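/- There exist a constant c > 0 and b₀ such that for all integers b ≥ b₀, all positive integers w with w < b·(log b)^{3/2}, and all points o ∈ ℝ₊² with D_δ(o) ⊆ ℝ₊² (c and b₀ independent of o): if w + b points are chosen independently and uniformly at random from D̂₁(o), with the first w colored white and the last b colored blue, then with probability at least 1 − c/(log b)^{3/2} there exist two blue points g₁, g₂ lying in D_δ(o) with d(g₁,g₂) ≤ 1 such that every one of the w + b points is within Euclidean distance 1 of g₁ or of g₂ (i.e. the two blue points form a connected dominating set of the unit disk graph on the w + b points). -/

import Mathlib

open MeasureTheory Real Set
open scoped ENNReal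

noncomputable section

/-- The Euclidean plane ℝ². -/
abbrev Plane := EuclideanSpace ℝ (Fin 2)

/-- The point in the plane with Cartesian coordinates `(x, y)`. -/
def pt (x y : ℝ) : Plane := (WithLp.equiv 2 (Fin 2 → ℝ)).symm ![x, y]

/-- `D p r` is the closed disk of radius `r` centered at `p`. -/
def D (p : Plane) (r : ℝ) : Set Plane := Metric.closedBall p r

/-- `X o q u` is the area of `D₁(o) \ (D₁(q) ∪ D₁(u))` (Lebesgue measure). -/
def X (o q u : Plane) : ℝ := (volume (D o 1 \ (D q 1 ∪ D u 1))).toReal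

/-- The closed positive quadrant `ℝ₊²`. -/
def quad : Set Plane := {p | 0 ≤ p 0 ∧ 0 ≤ p 1}

/-- The truncated unit disk `D̂₁(o) = D₁(o) ∩ ℝ₊²`. -/
def Dhat (o : Plane) : Set Plane := D o 1 ∩ quad

/-- `δ = 1/(b^(1/3) log b)`. -/
def δ (b : ℝ) : ℝ := 1 / (b ^ (1/3 : ℝ) * Real.log b)

/-- The uniform probability measure on a set `S` (normalized restricted Lebesgue measure). -/
def unif (S : Set Plane) : Measure Plane := (volume S)⁻¹ • volume.restrict S

/-!
Let `L = log b`, and call a pair of points of `D_δ(o)` nearly antipodal if they lie on opposite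
sides of `o` at distances of order `δ`, the second one within `O(δ²)` of the line through `o` and
the first. A point of the unit disk around `o` at distance more than `1` from both is `O(δ²)`-close
to the unit circle in a direction almost orthogonal to the pair, so such points have area `O(δ³)`.

Since `b δ³ = 1 / L³`, a fixed nearly antipodal blue pair misses one of the at most
`b (1 + L^(3/2))` points with probability `O(L^(-3/2))`. To make a random pair as good as a fixed
one, order the index pairs and take the first that is nearly antipodal: if it misses the point
`k`, it does not involve `k` and is also the first among the pairs avoiding `k`, which is
independent of the point `k`.

A pair exists with high probability: half of the blue points hit each of about `L⁴` cells of
separated slopes to the right of `o`, and the `L⁴` disjoint strips opposite to the points hit have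
total area of order `L⁴ δ³ = L / b`, so they are hit by one of the other blue points except with
probability exponentially small in `L`.
-/

section PairSearch

variable {ι α : Type*}

/-- `p` is the first index pair in `P`, in the order given by `rank`, whose points are related by
`R`. Fixing one rank for all `P` keeps the first pair unchanged when other pairs leave `P`. -/
def IsFirstPair (rank : ι × ι → ℕ) (P : Set (ι × ι)) (R : α → α → Prop) (ω : ι → α) (p : ι × ι) :
    Prop :=
  MinimalFor (fun r => r ∈ P ∧ R (ω r.1) (ω r.2)) rank p

lemma IsFirstPair.eq_of_agree {rank : ι × ι → ℕ} (hrank : rank.Injective) {P : Set (ι × ι)}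
    {R : α → α → Prop} {x y : ι → α} {p p' : ι × ι}
    (hxy : ∀ r ∈ P, y r.1 = x r.1 ∧ y r.2 = x r.2)
    (hp : IsFirstPair rank P R x p) (hp' : IsFirstPair rank P R y p') : p' = p := by
  have hpy : p ∈ P ∧ R (y p.1) (y p.2) := by
    rw [(hxy p hp.prop.1).1, (hxy p hp.prop.1).2]
    exact hp.prop
  have hpx' : p' ∈ P ∧ R (x p'.1) (x p'.2) := by
    rw [← (hxy p' hp'.prop.1).1, ← (hxy p' hp'.prop.1).2]
    exact hp'.prop
  exact hrank (le_antisymm (hp'.le hpy) (hp.le hpx'))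

lemma exists_isFirstPair_misses (rank : ι × ι → ℕ) {P : Set (ι × ι)} {R C : α → α → Prop}
    (hC : ∀ z, C z z) {ω : ι → α} (hne : ∃ r ∈ P, R (ω r.1) (ω r.2))
    (hmiss : ∀ r ∈ P, R (ω r.1) (ω r.2) → ∃ k, ¬C (ω k) (ω r.1) ∧ ¬C (ω k) (ω r.2)) :
    ∃ k p, IsFirstPair rank {r ∈ P | r.1 ≠ k ∧ r.2 ≠ k} R ω p ∧
      ¬C (ω k) (ω p.1) ∧ ¬C (ω k) (ω p.2) := by
  obtain ⟨p, hp⟩ := exists_minimalFor_of_wellFoundedLT _ rank hne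
  obtain ⟨k, hk₁, hk₂⟩ := hmiss p hp.prop.1 hp.prop.2
  have hpk : p.1 ≠ k ∧ p.2 ≠ k :=
    ⟨fun h => hk₁ (h ▸ hC _), fun h => hk₂ (h ▸ hC _)⟩
  exact ⟨k, p, hp.anti (fun r hr => ⟨hr.1.1, hr.2⟩) ⟨⟨hp.prop.1, hpk⟩, hp.prop.2⟩, hk₁, hk₂⟩

variable [MeasurableSpace α]

lemma measurable_rel_comp {R : α → α → Prop} (hR : MeasurableSet {z : α × α | R z.1 z.2})
    (i j : ι) : Measurable fun ω : ι → α => R (ω i) (ω j) := by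
  have hcoord : Measurable fun ω : ι → α => (ω i, ω j) := by fun_prop
  exact measurableSet_setOfPred.1 (hcoord hR)

lemma measurable_isFirstPair [Finite ι] (rank : ι × ι → ℕ) (P : Set (ι × ι)) {R : α → α → Prop}
    (hR : MeasurableSet {z : α × α | R z.1 z.2}) (p : ι × ι) :
    Measurable fun ω => IsFirstPair rank P R ω p :=
  have hrel (r : ι × ι) : Measurable fun ω : ι → α => r ∈ P ∧ R (ω r.1) (ω r.2) :=
    .and measurable_const (measurable_rel_comp hR r.1 r.2)
  .and (hrel p) (.forall fun r => .imp (hrel r) measurable_const)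

variable [Fintype ι] (μ : Measure α) [IsProbabilityMeasure μ]

/-- The event `B` may constrain the coordinates in `s` through the others: the confining set `T`
is allowed to depend on the coordinates outside `s`. -/
lemma pi_le_pow_of_section_subset (s : Finset ι) {B : Set (ι → α)} (hB : MeasurableSet B)
    (q : ℝ≥0∞)
    (h : ∀ x ∈ B, ∃ T : Set α, μ T ≤ q ∧ ∀ y ∈ B, (∀ i ∉ s, y i = x i) → ∀ j ∈ s, y j ∈ T) :
    (Measure.pi fun _ : ι => μ) B ≤ q ^ s.card := by
  classical
  rw [← lintegral_indicator_one hB]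
  refine (lintegral_le_of_lmarginal_le s (measurable_one.indicator hB)
    (g := fun _ => q ^ s.card) measurable_const fun x => ?_).trans (by simp)
  have marginal_eq_measure : lmarginal (fun _ : ι => μ) s (B.indicator 1) x
      = (Measure.pi fun _ : s => μ) (Function.updateFinset x s ⁻¹' B) := by
    rw [← lintegral_indicator_one (measurable_updateFinset hB)]
    rfl
  rw [marginal_eq_measure]
  rcases (Function.updateFinset x s ⁻¹' B).eq_empty_or_nonempty with hempty | ⟨y₀, hy₀⟩
  · simp [hempty]
  obtain ⟨T, hT, hBT⟩ := h _ hy₀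
  calc (Measure.pi fun _ : s => μ) (Function.updateFinset x s ⁻¹' B)
      ≤ (Measure.pi fun _ : s => μ) (Set.univ.pi fun _ => T) := by
        refine measure_mono fun y hy j _ => ?_
        simpa [Function.updateFinset] using
          hBT _ hy (fun i hi => by simp [Function.updateFinset, hi]) j j.2
    _ ≤ q ^ s.card := by
        rw [Measure.pi_pi]
        simpa using pow_le_pow_left' hT s.card
    _ = _ := by simp [lmarginal]

lemma pi_cells_hit_no_pair_le {τ : Type*} [Countable τ] {A : τ → Set α}
    (hA : ∀ t, MeasurableSet (A t)) {R : α → α → Prop}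
    (hR : MeasurableSet {z : α × α | R z.1 z.2}) {q : ℝ≥0∞}
    (hq : ∀ x : τ → α, (∀ t, x t ∈ A t) → μ {z | ∀ t, ¬R (x t) z} ≤ q)
    {I J : Finset ι} (hIJ : Disjoint I J) :
    (Measure.pi fun _ : ι => μ)
      {ω | (∀ t, ∃ i ∈ I, ω i ∈ A t) ∧ ∀ i ∈ I, ∀ j ∈ J, ¬R (ω i) (ω j)} ≤ q ^ J.card := by
  refine pi_le_pow_of_section_subset μ J (measurableSet_setOfPred.2 ?_) q ?_
  · refine .and (.forall fun t => .exists fun i => .and measurable_const ?_) (.forall fun i =>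
      .imp measurable_const (.forall fun j => .imp measurable_const
        (measurable_rel_comp hR i j).not))
    exact measurableSet_setOfPred.1 (measurable_pi_apply i (hA t))
  rintro x ⟨hhit, -⟩
  choose f hfI hfA using hhit
  refine ⟨{z | ∀ t, ¬R (x (f t)) z}, hq _ hfA, ?_⟩
  rintro y ⟨-, hy⟩ hyx j hj t
  rw [← hyx _ (Finset.disjoint_left.1 hIJ (hfI t))]
  exact hy _ (hfI t) j hj

/-- Once the other coordinates are fixed, the first pair avoiding `k` is fixed too, so `ω k` is
independent of it. -/
lemma pi_firstPair_misses_le {rank : ι × ι → ℕ} (hrank : rank.Injective) {P : Set (ι × ι)} {k : ι}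
    (hP : ∀ r ∈ P, r.1 ≠ k ∧ r.2 ≠ k) {R : α → α → Prop}
    (hR : MeasurableSet {z : α × α | R z.1 z.2}) {C : α → α → Prop}
    (hC : MeasurableSet {z : α × α | C z.1 z.2}) {ε : ℝ≥0∞}
    (hε : ∀ p q, R p q → μ {z | ¬C z p ∧ ¬C z q} ≤ ε) :
    (Measure.pi fun _ : ι => μ)
      {ω | ∃ p, IsFirstPair rank P R ω p ∧ ¬C (ω k) (ω p.1) ∧ ¬C (ω k) (ω p.2)} ≤ ε := by
  rw [← pow_one ε, ← Finset.card_singleton k]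
  refine pi_le_pow_of_section_subset μ {k} (measurableSet_setOfPred.2 <| .exists fun p =>
    .and (measurable_isFirstPair rank P hR p)
      (.and (measurable_rel_comp hC _ _).not (measurable_rel_comp hC _ _).not)) ε ?_
  rintro x ⟨p, hp, -⟩
  refine ⟨{z | ¬C z (x p.1) ∧ ¬C z (x p.2)}, hε _ _ hp.prop.2, ?_⟩
  rintro y ⟨p', hp', hmiss⟩ hyx j hj
  have hagree : ∀ r ∈ P, y r.1 = x r.1 ∧ y r.2 = x r.2 := fun r hr =>
    ⟨hyx _ (by simpa using (hP r hr).1), hyx _ (by simpa using (hP r hr).2)⟩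
  obtain rfl := hp.eq_of_agree hrank hagree hp'
  rw [(hagree p' hp.prop.1).1, (hagree p' hp.prop.1).2] at hmiss
  rwa [Finset.mem_singleton.1 hj]

lemma pi_avoid_le {A : Set α} {q : ℝ≥0∞} (hq : μ Aᶜ ≤ q) (I : Finset ι) :
    (Measure.pi fun _ : ι => μ) {ω | ∀ i ∈ I, ω i ∉ A} ≤ q ^ I.card := by
  calc (Measure.pi fun _ : ι => μ) {ω | ∀ i ∈ I, ω i ∉ A}
      = ∏ _i ∈ I, μ Aᶜ := Measure.pi_pi_finset (fun _ => μ) (fun _ => Aᶜ) I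
    _ ≤ q ^ I.card := by
        rw [Finset.prod_const]
        exact pow_le_pow_left' hq _

/-- Besides an empty cell and the absence of related pairs, the only way to fail is that the first
related pair misses some point `k`, and then it is also the first one among pairs avoiding `k`. -/
lemma pi_no_covering_pair_le {τ : Type*} [Fintype τ] {A : τ → Set α}
    (hA : ∀ t, MeasurableSet (A t)) {R C : α → α → Prop}
    (hR : MeasurableSet {z : α × α | R z.1 z.2}) (hC : MeasurableSet {z : α × α | C z.1 z.2})
    (hCrefl : ∀ z, C z z) {q₁ q₂ ε : ℝ≥0∞} (hq₁ : ∀ t, μ (A t)ᶜ ≤ q₁)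
    (hq₂ : ∀ x : τ → α, (∀ t, x t ∈ A t) → μ {z | ∀ t, ¬R (x t) z} ≤ q₂)
    (hε : ∀ p q, R p q → μ {z | ¬C z p ∧ ¬C z q} ≤ ε) {I J : Finset ι} (hIJ : Disjoint I J) :
    (Measure.pi fun _ : ι => μ)
      {ω | ¬∃ i ∈ I, ∃ j ∈ J, R (ω i) (ω j) ∧ ∀ k, C (ω k) (ω i) ∨ C (ω k) (ω j)} ≤
      Fintype.card τ * q₁ ^ I.card + q₂ ^ J.card + Fintype.card ι * ε := by
  obtain ⟨rank, hrank⟩ := Countable.exists_injective_nat (ι × ι)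
  let P : Set (ι × ι) := {r | r.1 ∈ I ∧ r.2 ∈ J}
  let emptyCell (t : τ) : Set (ι → α) := {ω | ∀ i ∈ I, ω i ∉ A t}
  let noPair : Set (ι → α) :=
    {ω | (∀ t, ∃ i ∈ I, ω i ∈ A t) ∧ ∀ i ∈ I, ∀ j ∈ J, ¬R (ω i) (ω j)}
  let missed (k : ι) : Set (ι → α) := {ω | ∃ p,
    IsFirstPair rank {r ∈ P | r.1 ≠ k ∧ r.2 ≠ k} R ω p ∧ ¬C (ω k) (ω p.1) ∧ ¬C (ω k) (ω p.2)}
  have hcover : {ω | ¬∃ i ∈ I, ∃ j ∈ J, R (ω i) (ω j) ∧ ∀ k, C (ω k) (ω i) ∨ C (ω k) (ω j)} ⊆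
      (⋃ t, emptyCell t) ∪ noPair ∪ ⋃ k, missed k := by
    intro ω hω
    by_cases hcells : ∀ t, ∃ i ∈ I, ω i ∈ A t
    · by_cases hpairs : ∀ i ∈ I, ∀ j ∈ J, ¬R (ω i) (ω j)
      · exact .inl (.inr ⟨hcells, hpairs⟩)
      push Not at hpairs
      obtain ⟨i, hi, j, hj, hij⟩ := hpairs
      refine .inr (mem_iUnion.2 (exists_isFirstPair_misses rank hCrefl
        ⟨(i, j), ⟨hi, hj⟩, hij⟩ fun r hr hrR => ?_))
      by_contra! hcov
      exact hω ⟨r.1, hr.1, r.2, hr.2, hrR, fun k => or_iff_not_imp_left.2 (hcov k)⟩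
    · push Not at hcells
      exact .inl (.inl (mem_iUnion.2 hcells))
  refine (measure_mono hcover).trans <| (measure_union_le _ _).trans <|
    add_le_add ((measure_union_le _ _).trans <| add_le_add ?_ ?_) ?_
  · simpa using (measure_iUnion_fintype_le _ emptyCell).trans
      (Finset.sum_le_sum fun t _ => pi_avoid_le μ (hq₁ t) I)
  · exact pi_cells_hit_no_pair_le μ hA hR hq₂ hIJ
  · have hmissed (k : ι) : (Measure.pi fun _ : ι => μ) (missed k) ≤ ε :=
      pi_firstPair_misses_le μ hrank (fun r hr => hr.2) hR hC hε
    simpa using (measure_iUnion_fintype_le _ missed).trans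
      (Finset.sum_le_sum fun k _ => hmissed k)

end PairSearch

section InnerProductSpace

variable {V : Type*} [NormedAddCommGroup V] [InnerProductSpace ℝ V]

/-- Being at distance more than `1` from `u` and from `v` bounds both inner products from above,
and the near antiparallelism of `u` and `v` turns the second bound into a lower bound on the
first. -/
lemma abs_inner_le_of_one_lt_norm_sub {u v x : V} {ε r : ℝ} (hu : ‖u‖ ^ 2 ≤ ε) (hv : ‖v‖ ^ 2 ≤ ε)
    (hr : 1 / 2 ≤ r) (huv : ‖v + r • u‖ ≤ ε / 2) (hx : ‖x‖ ≤ 1) (hxu : 1 < ‖x - u‖)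
    (hxv : 1 < ‖x - v‖) : |inner ℝ u x| ≤ 2 * ε ∧ 1 - 2 * ε ≤ ‖x‖ ^ 2 := by
  have hxsq : ‖x‖ ^ 2 ≤ 1 := pow_le_one₀ (norm_nonneg x) hx
  have hinner_u : 2 * inner ℝ u x < ε - (1 - ‖x‖ ^ 2) := by
    have := one_lt_pow₀ hxu two_ne_zero
    rw [norm_sub_sq_real, real_inner_comm] at this
    linarith
  have hinner_v : 2 * inner ℝ v x < ε - (1 - ‖x‖ ^ 2) := by
    have := one_lt_pow₀ hxv two_ne_zero
    rw [norm_sub_sq_real, real_inner_comm] at this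
    linarith
  have hantiparallel : -(ε / 2) ≤ inner ℝ v x + r * inner ℝ u x := by
    have hsmall : |inner ℝ (v + r • u) x| ≤ ε / 2 :=
      (abs_real_inner_le_norm _ _).trans
        ((mul_le_of_le_one_right (norm_nonneg _) hx).trans huv)
    rw [inner_add_left, real_inner_smul_left] at hsmall
    exact (abs_le.1 hsmall).1
  refine ⟨abs_le.2 ⟨?_, by nlinarith⟩, ?_⟩
  · by_contra! hneg
    nlinarith
  · by_contra! hlt
    nlinarith

end InnerProductSpace

lemma volume_sq_mem_Icc_le {A B : ℝ} (hA : 1 / 4 ≤ A) (hAB : A ≤ B) :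
    volume {y : ℝ | y ^ 2 ∈ Icc A B} ≤ ENNReal.ofReal (2 * (B - A)) := by
  have hsqrt : √B - √A ≤ B - A := by
    have hhalf : 1 / 2 ≤ √A := Real.le_sqrt_of_sq_le (by linarith)
    have hmono : √A ≤ √B := Real.sqrt_le_sqrt hAB
    nlinarith [Real.sq_sqrt (show 0 ≤ A by linarith), Real.sq_sqrt (show 0 ≤ B by linarith)]
  have hcover : {y : ℝ | y ^ 2 ∈ Icc A B} ⊆ Icc (√A) (√B) ∪ Icc (-√B) (-√A) := by
    rintro y ⟨hAy, hyB⟩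
    have hA' : √A ≤ |y| := (Real.sqrt_le_sqrt hAy).trans_eq (Real.sqrt_sq_eq_abs y)
    have hB' : |y| ≤ √B := (Real.sqrt_sq_eq_abs y).symm.trans_le (Real.sqrt_le_sqrt hyB)
    rcases abs_cases y with ⟨hy, -⟩ | ⟨hy, -⟩ <;> rw [hy] at hA' hB'
    · exact .inl ⟨hA', hB'⟩
    · exact .inr ⟨by linarith, by linarith⟩
  calc volume {y : ℝ | y ^ 2 ∈ Icc A B}
      ≤ volume (Icc (√A) (√B)) + volume (Icc (-√B) (-√A)) :=
        (measure_mono hcover).trans (measure_union_le _ _)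
    _ ≤ ENNReal.ofReal (B - A) + ENNReal.ofReal (B - A) := by
        rw [Real.volume_Icc, Real.volume_Icc, neg_sub_neg]
        gcongr
    _ = ENNReal.ofReal (2 * (B - A)) := by
        rw [← ENNReal.ofReal_add (by linarith) (by linarith), two_mul]

/-- The part of the annulus `1 - η ≤ ‖z‖ ^ 2 ≤ 1` in a thin slab through the origin: each slice
consists of two intervals away from `0`. -/
lemma volume_prod_slab_inter_annulus_le {a η : ℝ} (hη : 0 ≤ η) (haη : a ^ 2 + η ≤ 3 / 4) :
    volume {z : ℝ × ℝ | |z.1| ≤ a ∧ z.1 ^ 2 + z.2 ^ 2 ∈ Icc (1 - η) 1} ≤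
      ENNReal.ofReal (2 * a) * ENNReal.ofReal (2 * η) := by
  have hmeas : MeasurableSet {z : ℝ × ℝ | |z.1| ≤ a ∧ z.1 ^ 2 + z.2 ^ 2 ∈ Icc (1 - η) 1} := by
    measurability
  have hslice (x : ℝ) :
      volume (Prod.mk x ⁻¹' {z : ℝ × ℝ | |z.1| ≤ a ∧ z.1 ^ 2 + z.2 ^ 2 ∈ Icc (1 - η) 1}) ≤
        (Icc (-a) a).indicator (fun _ => ENNReal.ofReal (2 * η)) x := by
    by_cases hx : |x| ≤ a
    · rw [indicator_of_mem (mem_Icc.2 (abs_le.1 hx))]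
      have hsq : x ^ 2 ≤ a ^ 2 := sq_le_sq' (abs_le.1 hx).1 (abs_le.1 hx).2
      refine (measure_mono ?_).trans ((volume_sq_mem_Icc_le (A := 1 - η - x ^ 2) (B := 1 - x ^ 2)
        (by linarith) (by linarith)).trans_eq (by ring_nf))
      rintro y ⟨-, hlo, hhi⟩
      exact ⟨by linarith, by linarith⟩
    · simp [preimage, hx]
  rw [Measure.volume_eq_prod, Measure.prod_apply hmeas]
  refine (lintegral_mono hslice).trans_eq ?_
  rw [lintegral_indicator_const measurableSet_Icc, Real.volume_Icc, mul_comm]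
  ring_nf

namespace Plane

lemma measurePreserving_coords :
    MeasurePreserving (fun z : Plane => (z 0, z 1)) volume (volume : Measure (ℝ × ℝ)) :=
  (volume_preserving_finTwoArrow ℝ).comp (PiLp.volume_preserving_ofLp (Fin 2))

lemma norm_sq (z : Plane) : ‖z‖ ^ 2 = z 0 ^ 2 + z 1 ^ 2 := by
  rw [EuclideanSpace.real_norm_sq_eq, Fin.sum_univ_two]

lemma exists_measurePreserving_fst_eq_inner {e : Plane} (he : ‖e‖ = 1) :
    ∃ f : Plane → ℝ × ℝ, MeasurePreserving f volume volume ∧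
      (∀ z, (f z).1 = inner ℝ e z) ∧ ∀ z, (f z).1 ^ 2 + (f z).2 ^ 2 = ‖z‖ ^ 2 := by
  have horth : Orthonormal ℝ (({0} : Set (Fin 2)).domRestrict fun _ => e) :=
    ⟨fun _ => he, fun i j hij => absurd (Subsingleton.elim i j) hij⟩
  obtain ⟨b, hb⟩ := horth.exists_orthonormalBasis_extension_of_card_eq (by simp)
  refine ⟨fun z => (b.repr z 0, b.repr z 1),
    measurePreserving_coords.comp b.measurePreserving_repr, fun z => ?_, fun z => ?_⟩
  · exact (b.repr_apply_apply z 0).trans (by rw [hb 0 rfl])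
  · rw [← norm_sq, b.repr.norm_map]

lemma volume_slab_inter_annulus_le {e : Plane} (he : ‖e‖ = 1) {a η : ℝ} (hη : 0 ≤ η)
    (haη : a ^ 2 + η ≤ 3 / 4) :
    volume {z : Plane | |inner ℝ e z| ≤ a ∧ ‖z‖ ^ 2 ∈ Icc (1 - η) 1} ≤
      ENNReal.ofReal (2 * a) * ENNReal.ofReal (2 * η) := by
  obtain ⟨f, hf, hinner, hnorm⟩ := exists_measurePreserving_fst_eq_inner he
  simp_rw [← hnorm, ← hinner]
  exact (hf.measure_preimage_le _).trans (volume_prod_slab_inter_annulus_le hη haη)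

/-- The strip of vertical half-width `h` around the line through `o` of slope `s`, above the points
whose horizontal displacement from `o` lies in `I`. -/
def lineStrip (o : Plane) (s : ℝ) (I : Set ℝ) (h : ℝ) : Set Plane :=
  {z | z 0 - o 0 ∈ I ∧ |z 1 - o 1 - s * (z 0 - o 0)| < h}

lemma measurableSet_lineStrip (o : Plane) (s : ℝ) {I : Set ℝ} (hI : MeasurableSet I) (h : ℝ) :
    MeasurableSet (lineStrip o s I h) := by
  have hfst : Measurable fun z : Plane => z 0 - o 0 := by fun_prop
  have hheight : Measurable fun z : Plane => |z 1 - o 1 - s * (z 0 - o 0)| := by fun_prop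
  exact (hfst hI).inter (measurableSet_lt hheight measurable_const)

lemma volume_lineStrip (o : Plane) (s : ℝ) {I : Set ℝ} (hI : MeasurableSet I) (h : ℝ) :
    volume (lineStrip o s I h) = volume I * ENNReal.ofReal (2 * h) := by
  let f (x : ℝ) : ℝ := o 1 + s * (x - o 0)
  have hf : Measurable f := by fun_prop
  have hI' : MeasurableSet ((fun x => x - o 0) ⁻¹' I) := (measurable_sub_const _) hI
  have hstrip : lineStrip o s I h = (fun z : Plane => (z 0, z 1)) ⁻¹'
      regionBetween (fun x => f x - h) (fun x => f x + h) ((fun x => x - o 0) ⁻¹' I) := by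
    ext z
    refine and_congr_right fun _ => ?_
    simp only [f, abs_lt, mem_Ioo]
    constructor <;> rintro ⟨hlo, hhi⟩ <;> constructor <;> linarith
  rw [hstrip, measurePreserving_coords.measure_preimage (measurableSet_regionBetween
    (by fun_prop) (by fun_prop) hI').nullMeasurableSet, Measure.volume_eq_prod,
    volume_regionBetween_eq_lintegral (by fun_prop) (by fun_prop) hI']
  have hwidth (x : ℝ) : f x + h - (f x - h) = 2 * h := by ring
  simp only [Pi.sub_apply, hwidth, lintegral_const, Measure.restrict_apply_univ,
    (measurePreserving_sub_right volume (o 0)).measure_preimage hI.nullMeasurableSet, mul_comm]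

lemma volume_lineStrip_Icc (o : Plane) (s : ℝ) {a b : ℝ} (hab : a ≤ b) (h : ℝ) :
    volume (lineStrip o s (Icc a b) h) = ENNReal.ofReal ((b - a) * (2 * h)) := by
  rw [volume_lineStrip o s measurableSet_Icc, Real.volume_Icc,
    ENNReal.ofReal_mul (sub_nonneg.2 hab)]

/-- The slope of the line `op`, with the junk value `0` if the line is vertical. -/
def lineSlope (o p : Plane) : ℝ := (p 1 - o 1) / (p 0 - o 0)

lemma lineSlope_mul {o p : Plane} (h : p 0 - o 0 ≠ 0) : lineSlope o p * (p 0 - o 0) = p 1 - o 1 :=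
  div_mul_cancel₀ _ h

lemma abs_lineSlope_sub_le {o p : Plane} {s h c : ℝ} {I : Set ℝ} (hc : 0 < c) (hI : ∀ x ∈ I, c ≤ x)
    (hp : p ∈ lineStrip o s I h) : |lineSlope o p - s| ≤ h / c := by
  have hx : c ≤ p 0 - o 0 := hI _ hp.1
  have hx0 : 0 < p 0 - o 0 := hc.trans_le hx
  have hstrip : |lineSlope o p - s| * (p 0 - o 0) < h := by
    have := hp.2
    rwa [← lineSlope_mul hx0.ne', ← sub_mul, abs_mul, abs_of_pos hx0] at this
  rw [le_div_iff₀ hc]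
  exact (mul_le_mul_of_nonneg_left hx (abs_nonneg _)).trans hstrip.le

lemma disjoint_lineStrip {o : Plane} {s s' h h' c : ℝ} {I : Set ℝ} (hI : ∀ x ∈ I, c ≤ |x|)
    (hs : h + h' ≤ |s - s'| * c) : Disjoint (lineStrip o s I h) (lineStrip o s' I h') := by
  refine Set.disjoint_left.2 fun z hz hz' => ?_
  have hfar : h + h' ≤ |(s - s') * (z 0 - o 0)| := by
    rw [abs_mul]
    exact hs.trans (mul_le_mul_of_nonneg_left (hI _ hz.1) (abs_nonneg _))
  have hclose : |(s - s') * (z 0 - o 0)| < h + h' := by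
    calc |(s - s') * (z 0 - o 0)|
        = |(z 1 - o 1 - s' * (z 0 - o 0)) - (z 1 - o 1 - s * (z 0 - o 0))| := by ring_nf
      _ ≤ |z 1 - o 1 - s' * (z 0 - o 0)| + |z 1 - o 1 - s * (z 0 - o 0)| := abs_sub _ _
      _ < h + h' := by linarith [hz.2, hz'.2]
  exact hclose.not_ge hfar

lemma dist_le_of_mem_lineStrip {o z : Plane} {s h d : ℝ} {I : Set ℝ} (hs : |s| ≤ 1)
    (hI : ∀ x ∈ I, |x| ≤ d / 2) (hh : h ≤ d / 8) (hz : z ∈ lineStrip o s I h) :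
    dist z o ≤ d := by
  have hx : |z 0 - o 0| ≤ d / 2 := hI _ hz.1
  have hd : 0 ≤ d := by linarith [abs_nonneg (z 0 - o 0)]
  have hy : |z 1 - o 1| ≤ 5 / 8 * d := by
    calc |z 1 - o 1| = |(z 1 - o 1 - s * (z 0 - o 0)) + s * (z 0 - o 0)| := by ring_nf
      _ ≤ |z 1 - o 1 - s * (z 0 - o 0)| + |s| * |z 0 - o 0| := by
          rw [← abs_mul]
          exact abs_add_le _ _
      _ ≤ 5 / 8 * d := by nlinarith [hz.2, abs_nonneg (z 0 - o 0)]
  rw [dist_eq_norm, ← sq_le_sq₀ (norm_nonneg _) hd, norm_sq, PiLp.sub_apply, PiLp.sub_apply]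
  nlinarith [sq_le_sq' (abs_le.1 hx).1 (abs_le.1 hx).2, sq_le_sq' (abs_le.1 hy).1 (abs_le.1 hy).2]

end Plane

open Plane

/-- The points at distance of order `d` on the left of `o` lying close to the line `op`. -/
def oppositeStrip (o : Plane) (d : ℝ) (p : Plane) : Set Plane :=
  lineStrip o (lineSlope o p) (Icc (-(d / 2)) (-(d / 4))) (d ^ 2 / 8)

/-- `p` and `q` lie on opposite sides of `o` at distances of order `d`, and `q` is so close to the
line `op` that the unit disks around `p` and `q` almost cover the unit disk around `o`. -/
def NearlyAntipodal (o : Plane) (d : ℝ) (p q : Plane) : Prop :=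
  p 0 - o 0 ∈ Icc (d / 4) (d / 2) ∧ |lineSlope o p| ≤ 1 ∧ q ∈ oppositeStrip o d p

lemma measurableSet_nearlyAntipodal (o : Plane) (d : ℝ) :
    MeasurableSet {z : Plane × Plane | NearlyAntipodal o d z.1 z.2} := by
  have hfst : Measurable fun z : Plane × Plane => z.1 0 - o 0 := by fun_prop
  have hsnd : Measurable fun z : Plane × Plane => z.2 0 - o 0 := by fun_prop
  have hslope : Measurable fun z : Plane × Plane => lineSlope o z.1 := by
    unfold lineSlope
    fun_prop
  have hheight : Measurable fun z : Plane × Plane =>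
      |z.2 1 - o 1 - lineSlope o z.1 * (z.2 0 - o 0)| := by fun_prop
  exact (hfst measurableSet_Icc).inter <| (measurableSet_le hslope.norm measurable_const).inter <|
    (hsnd measurableSet_Icc).inter (measurableSet_lt hheight measurable_const)

section NearlyAntipodal

variable {o p q : Plane} {d : ℝ}

lemma measurableSet_oppositeStrip : MeasurableSet (oppositeStrip o d p) :=
  measurableSet_lineStrip _ _ measurableSet_Icc _

lemma volume_oppositeStrip (hd : 0 ≤ d) :
    volume (oppositeStrip o d p) = ENNReal.ofReal (d ^ 3 / 16) := by
  rw [oppositeStrip, volume_lineStrip_Icc _ _ (by linarith)]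
  ring_nf

namespace NearlyAntipodal

lemma dist_left_le (hd : 0 < d) (h : NearlyAntipodal o d p q) : dist p o ≤ d := by
  obtain ⟨hp, hslope, -⟩ := h
  have hp0 : p 0 - o 0 ≠ 0 := by linarith [hp.1]
  refine dist_le_of_mem_lineStrip (I := Icc (d / 4) (d / 2)) (h := d / 8) hslope
    (fun x hx => abs_le.2 ⟨by linarith [hx.1], hx.2⟩) le_rfl ⟨hp, ?_⟩
  rw [lineSlope_mul hp0, sub_self, abs_zero]
  positivity

lemma dist_right_le (hd : d ∈ Icc 0 1) (h : NearlyAntipodal o d p q) : dist q o ≤ d :=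
  dist_le_of_mem_lineStrip h.2.1
    (fun x hx => abs_le.2 ⟨by linarith [hx.1], by linarith [hx.2, hd.1]⟩)
    (by nlinarith [hd.1, hd.2]) h.2.2

lemma norm_add_smul_le (hd : 0 < d) (h : NearlyAntipodal o d p q) :
    ∃ r ≥ (1 / 2 : ℝ), ‖(q - o) + r • (p - o)‖ ≤ d ^ 2 / 2 := by
  obtain ⟨hp, -, hq, hstrip⟩ := h
  have hp0 : 0 < p 0 - o 0 := by linarith [hp.1]
  refine ⟨-(q 0 - o 0) / (p 0 - o 0), (le_div_iff₀ hp0).2 (by linarith [hp.2, hq.2]), ?_⟩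
  have hfst : ((q - o) + (-(q 0 - o 0) / (p 0 - o 0)) • (p - o)) 0 = 0 := by
    simp [div_mul_cancel₀ _ hp0.ne']
  have hsnd : ((q - o) + (-(q 0 - o 0) / (p 0 - o 0)) • (p - o)) 1 =
      q 1 - o 1 - lineSlope o p * (q 0 - o 0) := by
    simp [lineSlope]
    ring
  rw [← abs_norm, ← sq_le_sq₀ (abs_nonneg _) (by positivity), sq_abs, norm_sq, hfst, hsnd,
    ← sq_abs (_ - _)]
  nlinarith [abs_nonneg (q 1 - o 1 - lineSlope o p * (q 0 - o 0))]

/-- A point of the unit disk missed by the pair is `O(d ^ 2)`-close to the unit circle in a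
direction `O(d)`-close to the orthogonal of `p - o`. -/
lemma volume_missed_le (hd : d ∈ Ioc 0 (1 / 10)) (h : NearlyAntipodal o d p q) :
    volume ({z | 1 < dist z p ∧ 1 < dist z q} ∩ D o 1) ≤ ENNReal.ofReal (64 * d ^ 3) := by
  obtain ⟨hd0, hd1⟩ := hd
  obtain ⟨r, hr, hpq⟩ := h.norm_add_smul_le hd0
  have hp : ‖p - o‖ ^ 2 ≤ d ^ 2 := by
    rw [← dist_eq_norm]
    exact pow_le_pow_left₀ dist_nonneg (h.dist_left_le hd0) 2
  have hq : ‖q - o‖ ^ 2 ≤ d ^ 2 := by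
    rw [← dist_eq_norm]
    exact pow_le_pow_left₀ dist_nonneg (h.dist_right_le ⟨hd0.le, by linarith⟩) 2
  have hnorm : d / 4 ≤ ‖p - o‖ := h.1.1.trans ((le_abs_self _).trans (PiLp.norm_apply_le (p - o) 0))
  have hnorm0 : 0 < ‖p - o‖ := by linarith
  let e : Plane := ‖p - o‖⁻¹ • (p - o)
  have he : ‖e‖ = 1 := norm_smul_inv_norm (norm_pos_iff.1 hnorm0)
  have hslab : {z | 1 < dist z p ∧ 1 < dist z q} ∩ D o 1 ⊆ (fun z => z - o) ⁻¹'
      {x | |inner ℝ e x| ≤ 8 * d ∧ ‖x‖ ^ 2 ∈ Icc (1 - 2 * d ^ 2) 1} := by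
    rintro z ⟨⟨hzp, hzq⟩, hzo⟩
    rw [dist_eq_norm, ← sub_sub_sub_cancel_right z _ o] at hzp hzq
    rw [D, mem_closedBall_iff_norm] at hzo
    obtain ⟨hinner, hcircle⟩ := abs_inner_le_of_one_lt_norm_sub hp hq hr hpq hzo hzp hzq
    refine ⟨?_, hcircle, pow_le_one₀ (norm_nonneg _) hzo⟩
    rw [real_inner_smul_left, abs_mul, abs_of_pos (inv_pos.2 hnorm0), inv_mul_le_iff₀ hnorm0]
    nlinarith
  calc volume ({z | 1 < dist z p ∧ 1 < dist z q} ∩ D o 1)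
      ≤ volume {x : Plane | |inner ℝ e x| ≤ 8 * d ∧ ‖x‖ ^ 2 ∈ Icc (1 - 2 * d ^ 2) 1} :=
        (measure_mono hslab).trans ((measurePreserving_sub_right volume o).measure_preimage_le _)
    _ ≤ ENNReal.ofReal (2 * (8 * d)) * ENNReal.ofReal (2 * (2 * d ^ 2)) :=
        Plane.volume_slab_inter_annulus_le he (by positivity) (by nlinarith)
    _ = ENNReal.ofReal (64 * d ^ 3) := by
        rw [← ENNReal.ofReal_mul (by positivity)]
        ring_nf

end NearlyAntipodal

end NearlyAntipodal

/-- The `t`-th of `T` cells to the right of `o`, at distance of order `d`. The slopes of the lines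
from `o` to points of different cells differ by at least `1 / (4 * T)`. -/
def slopeCell (o : Plane) (d : ℝ) {T : ℕ} (t : Fin T) : Set Plane :=
  lineStrip o (t / (2 * T)) (Icc (d / 4) (d / 2)) (d / (32 * T))

section SlopeCell

variable {o p q p' : Plane} {d : ℝ} {T : ℕ} {t t' : Fin T}

lemma measurableSet_slopeCell : MeasurableSet (slopeCell o d t) :=
  measurableSet_lineStrip _ _ measurableSet_Icc _

lemma volume_slopeCell (hd : 0 ≤ d) :
    volume (slopeCell o d t) = ENNReal.ofReal (d ^ 2 / (64 * T)) := by
  rw [slopeCell, volume_lineStrip_Icc _ _ (by linarith)]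
  congr 1
  field_simp
  ring

lemma one_le_cast_of_fin (t : Fin T) : (1 : ℝ) ≤ T := by
  exact_mod_cast t.pos

lemma slopeCell_slope_mem_Icc (t : Fin T) : (t : ℝ) / (2 * T) ∈ Icc 0 (1 / 2) := by
  have hT := one_le_cast_of_fin t
  have ht : (t : ℝ) ≤ T := by exact_mod_cast t.is_le'
  exact ⟨by positivity, by rw [div_le_iff₀ (by positivity)]; linarith⟩

lemma slopeCell_subset_closedBall (hd : 0 ≤ d) : slopeCell o d t ⊆ D o d := by
  obtain ⟨hlo, hhi⟩ := slopeCell_slope_mem_Icc t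
  have hT := one_le_cast_of_fin t
  refine fun z hz => dist_le_of_mem_lineStrip (abs_le.2 ⟨by linarith, by linarith⟩)
    (fun x hx => abs_le.2 ⟨by linarith [hx.1], hx.2⟩) ?_ hz
  exact div_le_div_of_nonneg_left hd (by norm_num) (by linarith)

lemma abs_lineSlope_sub_le_of_mem_slopeCell (hd : 0 < d) (hp : p ∈ slopeCell o d t) :
    |lineSlope o p - t / (2 * T)| ≤ 1 / (8 * T) := by
  have hT := one_le_cast_of_fin t
  refine (abs_lineSlope_sub_le (by positivity) (fun x hx => hx.1) hp).trans_eq ?_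
  field_simp
  norm_num

lemma nearlyAntipodal_of_mem (hd : 0 < d) (hp : p ∈ slopeCell o d t)
    (hq : q ∈ oppositeStrip o d p) : NearlyAntipodal o d p q := by
  refine ⟨hp.1, ?_, hq⟩
  obtain ⟨hlo, hhi⟩ := slopeCell_slope_mem_Icc t
  have hwidth : 1 / (8 * (T : ℝ)) ≤ 1 / 8 := by
    have hT := one_le_cast_of_fin t
    exact one_div_le_one_div_of_le (by norm_num) (by linarith)
  have hslope := abs_le.1 (abs_lineSlope_sub_le_of_mem_slopeCell hd hp)
  exact abs_le.2 ⟨by linarith, by linarith⟩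

lemma disjoint_oppositeStrip (hd : 0 < d) (hTd : 4 * T * d ≤ 1) (htt' : t ≠ t')
    (hp : p ∈ slopeCell o d t) (hp' : p' ∈ slopeCell o d t') :
    Disjoint (oppositeStrip o d p) (oppositeStrip o d p') := by
  have hT := one_le_cast_of_fin t
  have hcells : 1 / (2 * (T : ℝ)) ≤ |(t : ℝ) / (2 * T) - t' / (2 * T)| := by
    have hone : (1 : ℝ) ≤ |(t : ℝ) - t'| := by
      have : (1 : ℤ) ≤ |((t : ℕ) : ℤ) - (t' : ℕ)| :=
        Int.one_le_abs (sub_ne_zero.2 (by exact_mod_cast Fin.val_ne_of_ne htt'))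
      exact_mod_cast this
    rw [← sub_div, abs_div, abs_of_pos (by positivity : (0 : ℝ) < 2 * T)]
    gcongr
  have hslopes : d ≤ |lineSlope o p - lineSlope o p'| := by
    have htri : |(t : ℝ) / (2 * T) - t' / (2 * T)| ≤ 1 / (8 * T) +
        |lineSlope o p - lineSlope o p'| + 1 / (8 * T) := by
      have hslope := abs_lineSlope_sub_le_of_mem_slopeCell hd hp
      have hslope' := abs_lineSlope_sub_le_of_mem_slopeCell hd hp'
      rw [abs_sub_comm] at hslope
      exact (abs_sub_le _ (lineSlope o p') _).trans
        (add_le_add ((abs_sub_le _ (lineSlope o p) _).trans (by gcongr)) hslope')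
    calc d ≤ 1 / (4 * T) := by rw [le_div_iff₀ (by positivity)]; linarith
      _ = 1 / (2 * T) - 1 / (8 * T) - 1 / (8 * T) := by field_simp; norm_num
      _ ≤ _ := by linarith
  refine disjoint_lineStrip (c := d / 4) (fun x hx => ?_) (by nlinarith)
  rw [abs_of_nonpos (by linarith [hx.2])]
  linarith [hx.2]

lemma volume_iUnion_oppositeStrip (hd : 0 < d) (hTd : 4 * T * d ≤ 1) {x : Fin T → Plane}
    (hx : ∀ t, x t ∈ slopeCell o d t) :
    volume (⋃ t, oppositeStrip o d (x t)) = ENNReal.ofReal (T * (d ^ 3 / 16)) := by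
  rw [measure_iUnion (fun t t' htt' => disjoint_oppositeStrip hd hTd htt' (hx t) (hx t'))
    (fun t => measurableSet_oppositeStrip), tsum_fintype]
  simp only [volume_oppositeStrip hd.le, Finset.sum_const, Finset.card_univ, Fintype.card_fin,
    nsmul_eq_mul, ENNReal.ofReal_mul (Nat.cast_nonneg T), ENNReal.ofReal_natCast]

end SlopeCell

lemma measure_compl_le_exp_neg {α : Type*} [MeasurableSpace α] (μ : Measure α)
    [IsProbabilityMeasure μ] {S : Set α} (hS : MeasurableSet S) {r : ℝ}
    (hr : ENNReal.ofReal r ≤ μ S) : μ Sᶜ ≤ ENNReal.ofReal (Real.exp (-r)) := by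
  rw [prob_compl_eq_one_sub hS, tsub_le_iff_right]
  calc (1 : ℝ≥0∞) ≤ ENNReal.ofReal (Real.exp (-r) + r) := by
        rw [← ENNReal.ofReal_one]
        exact ENNReal.ofReal_le_ofReal (by linarith [Real.add_one_le_exp (-r)])
    _ ≤ ENNReal.ofReal (Real.exp (-r)) + μ S := ENNReal.ofReal_add_le.trans (by gcongr)

section ComparableMeasure

variable {o p q : Plane} {d : ℝ} {μ : Measure Plane} {κ K : NNReal}

lemma ofReal_mul_le_measure (hκ : κ • volume.restrict (D o d) ≤ μ) {S : Set Plane} (hS : S ⊆ D o d)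
    {v : ℝ} (hv : volume S = ENNReal.ofReal v) : ENNReal.ofReal (κ * v) ≤ μ S := by
  calc ENNReal.ofReal (κ * v) = (κ • volume.restrict (D o d)) S := by
        rw [Measure.smul_apply, Measure.restrict_eq_self _ hS, hv, ENNReal.smul_def, smul_eq_mul,
          ENNReal.ofReal_mul κ.coe_nonneg, ENNReal.ofReal_coe_nnreal]
    _ ≤ μ S := hκ S

lemma measure_missed_le (hd : d ∈ Ioc 0 (1 / 10)) (hK : μ ≤ K • volume.restrict (D o 1))
    (h : NearlyAntipodal o d p q) :
    μ {z | ¬dist z p ≤ 1 ∧ ¬dist z q ≤ 1} ≤ ENNReal.ofReal (K * (64 * d ^ 3)) := by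
  have hD : MeasurableSet (D o 1) := measurableSet_closedBall
  simp only [not_le]
  calc μ {z | 1 < dist z p ∧ 1 < dist z q}
      ≤ (K • volume.restrict (D o 1)) {z | 1 < dist z p ∧ 1 < dist z q} := hK _
    _ ≤ K * ENNReal.ofReal (64 * d ^ 3) := by
        rw [Measure.smul_apply, Measure.restrict_apply' hD, ENNReal.smul_def, smul_eq_mul]
        gcongr
        exact h.volume_missed_le hd
    _ = ENNReal.ofReal (K * (64 * d ^ 3)) := by
        rw [ENNReal.ofReal_mul K.coe_nonneg, ENNReal.ofReal_coe_nnreal]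

variable [IsProbabilityMeasure μ]

lemma measure_compl_slopeCell_le (hd : 0 ≤ d) (hκ : κ • volume.restrict (D o d) ≤ μ) {T : ℕ}
    (t : Fin T) :
    μ (slopeCell o d t)ᶜ ≤ ENNReal.ofReal (Real.exp (-(κ * (d ^ 2 / (64 * T))))) :=
  measure_compl_le_exp_neg μ measurableSet_slopeCell
    (ofReal_mul_le_measure hκ (slopeCell_subset_closedBall hd) (volume_slopeCell hd))

lemma measure_forall_not_nearlyAntipodal_le (hd : d ∈ Ioc 0 1)
    (hκ : κ • volume.restrict (D o d) ≤ μ) {T : ℕ} (hTd : 4 * T * d ≤ 1) {x : Fin T → Plane}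
    (hx : ∀ t, x t ∈ slopeCell o d t) :
    μ {z | ∀ t, ¬NearlyAntipodal o d (x t) z} ≤
      ENNReal.ofReal (Real.exp (-(κ * (T * (d ^ 3 / 16))))) := by
  have hpair {t : Fin T} {z : Plane} (hz : z ∈ oppositeStrip o d (x t)) :
      NearlyAntipodal o d (x t) z := nearlyAntipodal_of_mem hd.1 (hx t) hz
  have hsub : (⋃ t, oppositeStrip o d (x t)) ⊆ D o d :=
    iUnion_subset fun t z hz => (hpair hz).dist_right_le (Ioc_subset_Icc_self hd)
  calc μ {z | ∀ t, ¬NearlyAntipodal o d (x t) z}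
      ≤ μ (⋃ t, oppositeStrip o d (x t))ᶜ := by
        refine measure_mono fun z hz hmem => ?_
        obtain ⟨t, ht⟩ := mem_iUnion.1 hmem
        exact hz t (hpair ht)
    _ ≤ _ := measure_compl_le_exp_neg μ (.iUnion fun t => measurableSet_oppositeStrip)
        (ofReal_mul_le_measure hκ hsub (volume_iUnion_oppositeStrip hd.1 hTd hx))

lemma pi_no_covering_nearlyAntipodal_le {ι : Type*} [Fintype ι] (hd : d ∈ Ioc 0 (1 / 10))
    (hκ : κ • volume.restrict (D o d) ≤ μ) (hK : μ ≤ K • volume.restrict (D o 1)) {T : ℕ}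
    (hTd : 4 * T * d ≤ 1) {I J : Finset ι} (hIJ : Disjoint I J) :
    (Measure.pi fun _ : ι => μ)
      {ω | ¬∃ i ∈ I, ∃ j ∈ J, NearlyAntipodal o d (ω i) (ω j) ∧
        ∀ k, dist (ω k) (ω i) ≤ 1 ∨ dist (ω k) (ω j) ≤ 1} ≤
      ENNReal.ofReal (T * Real.exp (-(κ * (d ^ 2 / (64 * T)))) ^ I.card +
        Real.exp (-(κ * (T * (d ^ 3 / 16)))) ^ J.card +
        Fintype.card ι * (K * (64 * d ^ 3))) := by
  have hd1 : d ∈ Ioc 0 1 := ⟨hd.1, by linarith [hd.2]⟩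
  refine (pi_no_covering_pair_le μ (fun t : Fin T => measurableSet_slopeCell)
    (measurableSet_nearlyAntipodal o d) (C := fun z p => dist z p ≤ 1)
    (measurableSet_le (by fun_prop) (by fun_prop)) (fun z => by simp)
    (measure_compl_slopeCell_le hd.1.le hκ)
    (fun x hx => measure_forall_not_nearlyAntipodal_le hd1 hκ hTd hx)
    (fun p q => measure_missed_le hd hK) hIJ).trans_eq ?_
  have hd0 : 0 ≤ d := hd.1.le
  rw [ENNReal.ofReal_add (by positivity) (by positivity),
    ENNReal.ofReal_add (by positivity) (by positivity), ENNReal.ofReal_mul (Nat.cast_nonneg T),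
    ENNReal.ofReal_mul (Nat.cast_nonneg (Fintype.card ι)), ENNReal.ofReal_pow (by positivity),
    ENNReal.ofReal_pow (by positivity), ENNReal.ofReal_natCast, ENNReal.ofReal_natCast,
    Fintype.card_fin]

end ComparableMeasure

section Uniform

variable {S A : Set Plane} {κ K : NNReal}

lemma smul_restrict_le_unif (hA : A ⊆ S) (hκ : κ ≤ (volume S)⁻¹) :
    κ • volume.restrict A ≤ unif S := by
  intro B
  rw [unif, Measure.smul_apply, Measure.smul_apply, ENNReal.smul_def, smul_eq_mul, smul_eq_mul]
  gcongr

lemma unif_le_smul_restrict (hA : S ⊆ A) (hK : (volume S)⁻¹ ≤ K) :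
    unif S ≤ K • volume.restrict A := by
  intro B
  rw [unif, Measure.smul_apply, Measure.smul_apply, ENNReal.smul_def, smul_eq_mul, smul_eq_mul]
  gcongr

lemma isProbabilityMeasure_unif (h₀ : volume S ≠ 0) (h₁ : volume S ≠ ∞) :
    IsProbabilityMeasure (unif S) :=
  ⟨by simp [unif, ENNReal.inv_mul_cancel h₀ h₁]⟩

lemma volume_Dhat_le (o : Plane) : volume (Dhat o) ≤ 4 := by
  calc volume (Dhat o) ≤ volume (Metric.closedBall o 1) := measure_mono inter_subset_left
    _ = ENNReal.ofReal π := by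
        rw [EuclideanSpace.volume_closedBall_fin_two]
        simp [← NNReal.coe_real_pi]
    _ ≤ 4 := by
        rw [← ENNReal.ofReal_ofNat]
        exact ENNReal.ofReal_le_ofReal Real.pi_le_four

lemma le_volume_Dhat {o : Plane} (ho : o ∈ quad) : ENNReal.ofReal (1 / 8) ≤ volume (Dhat o) := by
  calc ENNReal.ofReal (1 / 8) = volume (lineStrip o 1 (Icc (1 / 4) (1 / 2)) (1 / 4)) := by
        rw [volume_lineStrip_Icc _ _ (by norm_num)]
        norm_num
    _ ≤ volume (Dhat o) := by
        refine measure_mono fun z ⟨⟨hx, hx'⟩, hz⟩ => ?_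
        obtain ⟨hy, hy'⟩ := abs_lt.1 hz
        refine ⟨?_, by linarith [ho.1], by linarith [ho.2]⟩
        rw [D, mem_closedBall_iff_norm, ← sq_le_one_iff₀ (norm_nonneg _), norm_sq]
        simp only [PiLp.sub_apply]
        nlinarith

variable {o : Plane}

lemma isProbabilityMeasure_unif_Dhat (ho : o ∈ quad) : IsProbabilityMeasure (unif (Dhat o)) :=
  isProbabilityMeasure_unif (ne_of_gt ((by simp : 0 < ENNReal.ofReal (1 / 8)).trans_le
    (le_volume_Dhat ho))) (ne_top_of_le_ne_top (by simp) (volume_Dhat_le o))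

lemma smul_restrict_le_unif_Dhat {r : ℝ} (hr : r ≤ 1) (hquad : D o r ⊆ quad) :
    (4⁻¹ : NNReal) • volume.restrict (D o r) ≤ unif (Dhat o) := by
  refine smul_restrict_le_unif (subset_inter (Metric.closedBall_subset_closedBall hr) hquad) ?_
  rw [ENNReal.coe_inv four_ne_zero]
  exact ENNReal.inv_le_inv.2 (volume_Dhat_le o)

lemma unif_Dhat_le_smul_restrict (ho : o ∈ quad) :
    unif (Dhat o) ≤ (8 : NNReal) • volume.restrict (D o 1) := by
  refine unif_le_smul_restrict inter_subset_left ?_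
  rw [ENNReal.inv_le_iff_inv_le]
  refine le_trans ?_ (le_volume_Dhat ho)
  rw [one_div, ENNReal.ofReal_inv_of_pos (by norm_num)]
  simp

end Uniform

lemma δ_le_one {b : ℝ} (hb : 3 ≤ b) : δ b ≤ 1 := by
  have hlog : 1 ≤ Real.log b := by
    rw [Real.le_log_iff_exp_le (by linarith)]
    exact Real.exp_one_lt_three.le.trans hb
  have hpow : 1 ≤ b ^ (1 / 3 : ℝ) := Real.one_le_rpow (by linarith) (by norm_num)
  exact div_le_one_of_le₀ (one_le_mul_of_one_le_of_one_le hpow hlog) (by positivity)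

lemma δ_eq_of_pos {b : ℝ} (hb : 0 < b) :
    δ b = 1 / (Real.exp (Real.log b / 3) * Real.log b) := by
  rw [δ, Real.rpow_def_of_pos hb, mul_one_div]

section Asymptotics

variable {E L T κ : ℝ}

lemma rpow_three_halves_le_sq (hL : 1 ≤ L) : L ^ (3 / 2 : ℝ) ≤ L ^ 2 := by
  rw [← Real.rpow_natCast]
  exact Real.rpow_le_rpow_of_exponent_le hL (by norm_num)

lemma emptyCell_bound_le (hκ : 0 ≤ κ) (hE : 0 < E) (hL : 1 ≤ L) (hT : 0 < T) (hT' : T ≤ 2 * L ^ 4)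
    (hκE : 384 * L ^ 7 ≤ κ * E) (hexp : 2 * L ^ 6 ≤ Real.exp L) {n : ℕ} (hn : E ^ 3 ≤ 3 * n) :
    T * Real.exp (-(κ * ((1 / (E * L)) ^ 2 / (64 * T)))) ^ n ≤ 1 / L ^ (3 / 2 : ℝ) := by
  have hexponent : L ≤ n * (κ * ((1 / (E * L)) ^ 2 / (64 * T))) := by
    calc L ≤ κ * E / (384 * L ^ 6) := by
          rw [le_div_iff₀ (by positivity)]
          linarith
      _ = E ^ 3 / 3 * (κ * ((1 / (E * L)) ^ 2 / (64 * (2 * L ^ 4)))) := by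
          field_simp
          ring
      _ ≤ n * (κ * ((1 / (E * L)) ^ 2 / (64 * T))) := by
          gcongr
          linarith
  rw [← Real.exp_nat_mul, mul_neg]
  calc T * Real.exp (-(n * (κ * ((1 / (E * L)) ^ 2 / (64 * T)))))
      ≤ 2 * L ^ 4 * Real.exp (-L) := by gcongr
    _ = 2 * L ^ 6 * Real.exp (-L) / L ^ 2 := by field_simp
    _ ≤ 1 / L ^ 2 := by
        rw [Real.exp_neg, ← div_eq_mul_inv]
        gcongr
        exact (div_le_one (Real.exp_pos L)).2 hexp
    _ ≤ 1 / L ^ (3 / 2 : ℝ) := by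
        gcongr
        exact rpow_three_halves_le_sq hL

lemma noPair_bound_le (hκ : 0 ≤ κ) (hE : 0 < E) (hL : 1 ≤ L) (hT : L ^ 4 ≤ T)
    (hexp : L ^ 2 ≤ Real.exp (κ / 48 * L)) {m : ℕ} (hm : E ^ 3 ≤ 3 * m) :
    Real.exp (-(κ * (T * ((1 / (E * L)) ^ 3 / 16)))) ^ m ≤ 1 / L ^ (3 / 2 : ℝ) := by
  have hexponent : κ / 48 * L ≤ m * (κ * (T * ((1 / (E * L)) ^ 3 / 16))) := by
    calc κ / 48 * L = E ^ 3 / 3 * (κ * (L ^ 4 * ((1 / (E * L)) ^ 3 / 16))) := by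
          field_simp
          ring
      _ ≤ m * (κ * (T * ((1 / (E * L)) ^ 3 / 16))) := by
          gcongr
          linarith
  rw [← Real.exp_nat_mul, mul_neg]
  calc Real.exp (-(m * (κ * (T * ((1 / (E * L)) ^ 3 / 16)))))
      ≤ Real.exp (-(κ / 48 * L)) := by gcongr
    _ ≤ 1 / L ^ (3 / 2 : ℝ) := by
        rw [Real.exp_neg, ← one_div]
        gcongr
        exact (rpow_three_halves_le_sq hL).trans hexp

lemma missed_bound_le {K N : ℝ} (hK : 0 ≤ K) (hE : 0 < E) (hL : 1 ≤ L)
    (hN : N ≤ E ^ 3 * L ^ (3 / 2 : ℝ) + E ^ 3) :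
    N * (K * (64 * (1 / (E * L)) ^ 3)) ≤ 128 * K / L ^ (3 / 2 : ℝ) := by
  have hsq : L ^ (3 / 2 : ℝ) * L ^ (3 / 2 : ℝ) = L ^ 3 := by
    rw [← Real.rpow_add (by linarith), ← Real.rpow_natCast]
    norm_num
  have hone : 1 ≤ L ^ (3 / 2 : ℝ) := Real.one_le_rpow hL (by norm_num)
  calc N * (K * (64 * (1 / (E * L)) ^ 3))
      ≤ 2 * E ^ 3 * L ^ (3 / 2 : ℝ) * (K * (64 * (1 / (E * L)) ^ 3)) := by
        gcongr
        nlinarith [pow_pos hE 3]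
    _ = 128 * K * L ^ (3 / 2 : ℝ) / L ^ 3 := by
        field_simp
        ring
    _ = 128 * K / L ^ (3 / 2 : ℝ) := by
        rw [← hsq]
        field_simp

lemma eventually_mul_pow_le_exp (C : ℝ) (k : ℕ) {a : ℝ} (ha : 0 < a) :
    ∀ᶠ L : ℝ in Filter.atTop, C * L ^ k ≤ Real.exp (a * L) := by
  filter_upwards [((isLittleO_pow_exp_pos_mul_atTop k ha).const_mul_left C).bound one_pos]
    with L hL
  rw [one_mul, Real.norm_of_nonneg (Real.exp_pos _).le] at hL
  exact (le_abs_self _).trans hL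

lemma eventually_pow_le_exp (hκ : 0 < κ) :
    ∀ᶠ L : ℝ in Filter.atTop, 1 ≤ L ∧ 10 * L ^ 4 ≤ Real.exp (L / 3) ∧
      384 * L ^ 7 ≤ κ * Real.exp (L / 3) ∧ 2 * L ^ 6 ≤ Real.exp L ∧
      L ^ 2 ≤ Real.exp (κ / 48 * L) := by
  filter_upwards [Filter.eventually_ge_atTop 1,
    eventually_mul_pow_le_exp 10 4 (a := 1 / 3) (by norm_num),
    eventually_mul_pow_le_exp (384 / κ) 7 (a := 1 / 3) (by norm_num),
    eventually_mul_pow_le_exp 2 6 one_pos,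
    eventually_mul_pow_le_exp 1 2 (a := κ / 48) (by positivity)] with L hL h₄ h₇ h₆ h₂
  rw [one_div_mul_eq_div] at h₄ h₇
  rw [div_mul_eq_mul_div, div_le_iff₀' hκ] at h₇
  rw [one_mul] at h₆ h₂
  exact ⟨hL, h₄, h₇, h₆, h₂⟩

/-- With `(log b) ^ 4` cells the expected number of points in a cell is a power of `b` up to
logarithmic factors, while the opposite strips contain a logarithmic expected number of points. -/
lemma eventually_failure_bound_le {K : ℝ} (hκ : 0 < κ) (hK : 0 ≤ K) :
    ∀ᶠ b : ℕ in Filter.atTop, δ b ∈ Ioc 0 (1 / 10) ∧ ∃ T : ℕ, 4 * T * δ b ≤ 1 ∧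
      ∀ n m N : ℕ, b ≤ 3 * n → b ≤ 3 * m → (N : ℝ) ≤ b * (Real.log b) ^ (3 / 2 : ℝ) + b →
        T * Real.exp (-(κ * (δ b ^ 2 / (64 * T)))) ^ n +
          Real.exp (-(κ * (T * (δ b ^ 3 / 16)))) ^ m + N * (K * (64 * δ b ^ 3)) ≤
          (128 * K + 2) / (Real.log b) ^ (3 / 2 : ℝ) := by
  have hlog : Filter.Tendsto (fun b : ℕ => Real.log b) Filter.atTop Filter.atTop :=
    Real.tendsto_log_atTop.comp tendsto_natCast_atTop_atTop
  filter_upwards [Filter.eventually_gt_atTop 0, hlog.eventually (eventually_pow_le_exp hκ)]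
    with b hb ⟨hL, h₄, hκE, h₆, h₂⟩
  have hb0 : (0 : ℝ) < b := by exact_mod_cast hb
  rw [δ_eq_of_pos hb0]
  set L := Real.log b
  set E := Real.exp (L / 3)
  have hE : 0 < E := Real.exp_pos _
  have hE3 : E ^ 3 = b := by
    rw [← Real.exp_nat_mul, ← Real.exp_log hb0]
    congr 1
    push_cast
    ring
  have hL4 : 1 ≤ L ^ 4 := one_le_pow₀ hL
  have hT : L ^ 4 ≤ ⌈L ^ 4⌉₊ := Nat.le_ceil _
  have hT' : (⌈L ^ 4⌉₊ : ℝ) ≤ 2 * L ^ 4 := by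
    linarith [Nat.ceil_lt_add_one (by positivity : 0 ≤ L ^ 4)]
  refine ⟨⟨by positivity, ?_⟩, ⌈L ^ 4⌉₊, ?_, fun n m N hn hm hN => ?_⟩
  · exact one_div_le_one_div_of_le (by norm_num) (by nlinarith)
  · rw [mul_one_div]
    exact div_le_one_of_le₀ (by nlinarith) (by positivity)
  · have hn' : E ^ 3 ≤ 3 * n := by rw [hE3]; exact_mod_cast hn
    have hm' : E ^ 3 ≤ 3 * m := by rw [hE3]; exact_mod_cast hm
    rw [← hE3] at hN
    calc _ ≤ 1 / L ^ (3 / 2 : ℝ) + 1 / L ^ (3 / 2 : ℝ) + 128 * K / L ^ (3 / 2 : ℝ) :=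
          add_le_add (add_le_add
            (emptyCell_bound_le hκ.le hE hL (by linarith) hT' hκE h₆ hn')
            (noPair_bound_le hκ.le hE hL hT h₂ hm')) (missed_bound_le hK hE hL hN)
      _ = (128 * K + 2) / L ^ (3 / 2 : ℝ) := by ring

end Asymptotics

lemma exists_disjoint_finsets_of_natAdd (w : ℕ) {b : ℕ} (hb : 2 ≤ b) :
    ∃ I J : Finset (Fin (w + b)), Disjoint I J ∧ (∀ i ∈ I ∪ J, w ≤ (i : ℕ)) ∧
      b ≤ 3 * I.card ∧ b ≤ 3 * J.card := by
  let blue : Finset (Fin (w + b)) := Finset.univ.map (Fin.natAddEmb w)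
  have hcard : blue.card = b := by simp [blue]
  obtain ⟨I, hI, hIcard⟩ := Finset.exists_subset_card_eq (s := blue) (n := b / 2) (by omega)
  refine ⟨I, blue \ I, Finset.disjoint_sdiff, fun i hi => ?_, by omega, ?_⟩
  · rw [Finset.union_sdiff_of_subset hI] at hi
    obtain ⟨k, -, rfl⟩ := Finset.mem_map.1 hi
    exact Nat.le_add_right w k
  · rw [Finset.card_sdiff_of_subset hI]
    omega

lemma ofReal_one_sub_le_measure {α : Type*} [MeasurableSpace α] {μ : Measure α}
    [IsProbabilityMeasure μ] {S : Set α} {r : ℝ} (hr : 0 ≤ r) (h : μ Sᶜ ≤ ENNReal.ofReal r) :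
    ENNReal.ofReal (1 - r) ≤ μ S := by
  rw [ENNReal.ofReal_sub _ hr, ENNReal.ofReal_one, tsub_le_iff_right, ← measure_univ (μ := μ),
    ← union_compl_self S]
  exact (measure_union_le _ _).trans (by gcongr)

theorem local_blue_connected_dominating_pair_general {κ K : NNReal} (hκ : 0 < κ) :
    ∃ c > (0 : ℝ), ∃ b₀ : ℕ, ∀ b : ℕ, b₀ ≤ b → ∀ w : ℕ,
      (w : ℝ) ≤ (b : ℝ) * (Real.log b) ^ (3/2 : ℝ) →
      ∀ (o : Plane) (μ : Measure Plane) [IsProbabilityMeasure μ],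
        κ • volume.restrict (D o (δ b)) ≤ μ → μ ≤ K • volume.restrict (D o 1) →
        ENNReal.ofReal (1 - c / (Real.log b) ^ (3/2 : ℝ)) ≤
          (Measure.pi fun _ : Fin (w + b) => μ)
            {ω | ∃ g₁ g₂ : Fin (w + b), g₁ ≠ g₂ ∧ w ≤ (g₁ : ℕ) ∧ w ≤ (g₂ : ℕ) ∧
              ω g₁ ∈ D o (δ b) ∧ ω g₂ ∈ D o (δ b) ∧ dist (ω g₁) (ω g₂) ≤ 1 ∧
              ∀ j : Fin (w + b), dist (ω j) (ω g₁) ≤ 1 ∨ dist (ω j) (ω g₂) ≤ 1} := by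
  obtain ⟨b₀, hb₀⟩ := Filter.eventually_atTop.1
    ((eventually_failure_bound_le (NNReal.coe_pos.2 hκ) K.coe_nonneg).and
      (Filter.eventually_ge_atTop 2))
  refine ⟨128 * K + 2, by positivity, b₀, fun b hb w hw o μ _ hκμ hμK => ?_⟩
  obtain ⟨⟨hδ, T, hTδ, hfail⟩, hb2⟩ := hb₀ b hb
  obtain ⟨I, J, hIJ, hblue, hI, hJ⟩ := exists_disjoint_finsets_of_natAdd w hb2
  have hbound := (pi_no_covering_nearlyAntipodal_le hδ hκμ hμK hTδ hIJ).trans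
    (ENNReal.ofReal_le_ofReal (hfail _ _ _ hI hJ (by
      rw [Fintype.card_fin]
      push_cast
      gcongr)))
  refine (ofReal_one_sub_le_measure (by positivity) hbound).trans (measure_mono ?_)
  rintro ω ⟨i, hi, j, hj, hpair, hcover⟩
  have hi₀ := hpair.dist_left_le hδ.1
  have hj₀ := hpair.dist_right_le ⟨hδ.1.le, by linarith [hδ.2]⟩
  refine ⟨i, j, hIJ.forall_ne_finset hi hj, hblue i (Finset.mem_union_left _ hi),
    hblue j (Finset.mem_union_right _ hj), hi₀, hj₀, ?_, hcover⟩
  linarith [dist_triangle_right (ω i) (ω j) o, hδ.2]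

/-- There are `c > 0` and `b₀` (independent of `o`) such that for all integers
`b ≥ b₀`, all positive integers `w < b (log b)^{3/2}`, and all `o ∈ ℝ₊²` with `D_δ(o) ⊆ ℝ₊²`:
if `w + b` points are chosen i.i.d. uniformly from `D̂₁(o)` (the first `w` white, the last
`b` blue), then with probability at least `1 − c/(log b)^{3/2}` there are two distinct blue
points in `D_δ(o)` at distance at most `1` from each other such that every one of the `w + b`
points is within distance `1` of one of them. -/
theorem local_blue_connected_dominating_pair :
    ∃ c > (0 : ℝ), ∃ b₀ : ℕ, ∀ b : ℕ, b₀ ≤ b → ∀ w : ℕ, 0 < w →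
      (w : ℝ) < (b : ℝ) * (Real.log b) ^ (3/2 : ℝ) →
      ∀ o : Plane, o ∈ quad → D o (δ b) ⊆ quad →
        ENNReal.ofReal (1 - c / (Real.log b) ^ (3/2 : ℝ)) ≤
          (Measure.pi fun _ : Fin (w + b) => unif (Dhat o))
            {ω | ∃ g₁ g₂ : Fin (w + b), g₁ ≠ g₂ ∧ w ≤ (g₁ : ℕ) ∧ w ≤ (g₂ : ℕ) ∧
              ω g₁ ∈ D o (δ b) ∧ ω g₂ ∈ D o (δ b) ∧ dist (ω g₁) (ω g₂) ≤ 1 ∧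
              ∀ j : Fin (w + b), dist (ω j) (ω g₁) ≤ 1 ∨ dist (ω j) (ω g₂) ≤ 1} := by
  obtain ⟨c, hc, b₀, hgeneral⟩ :=
    local_blue_connected_dominating_pair_general (κ := 4⁻¹) (K := 8) (by positivity)
  refine ⟨c, hc, max b₀ 3, fun b hb w _ hw o ho hquad => ?_⟩
  have hb3 : (3 : ℝ) ≤ b := by exact_mod_cast (le_max_right b₀ 3).trans hb
  have := isProbabilityMeasure_unif_Dhat ho
  exact hgeneral b ((le_max_left b₀ 3).trans hb) w hw.le o _
    (smul_restrict_le_unif_Dhat (δ_le_one hb3) hquad) (unif_Dhat_le_smul_restrict ho)
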